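/- For every δ>0 and every ν∈𝒫(V), I_δ(ν)<∞ if and only if there exists q̂∈𝒯_G with νq̂=ν. -/

import Mathlib

open scoped BigOperators Classical ENNReal
open Filter Topology

noncomputable section
namespace ORRW

/-- Probability measures on a finite type `A`, topologized as a subset of `ℝ^A`. -/
abbrev ProbMeas (A : Type) [Fintype A] : Type :=
  {p : A → ℝ // (∀ a, 0 ≤ p a) ∧ ∑ a, p a = 1}

/-- Relative entropy `R(γ‖ρ)` between two finitely supported "rows", valued in `EReal`,
with `+∞` when absolute continuity fails. -/
def relEnt {A : Type} [Fintype A] (γ ρ : A → ℝ) : EReal :=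
  if ∀ a, ρ a = 0 → γ a = 0 then ((∑ a, γ a * Real.log (γ a / ρ a) : ℝ) : EReal)
  else (⊤ : EReal)

/-- `∫ R(q‖p) dν = Σ_a ν(a) · R(q(a,·)‖p(a,·))`. -/
def relEntInt {A : Type} [Fintype A] (ν : A → ℝ) (q p : A → A → ℝ) : EReal :=
  ∑ a, (ν a : EReal) * relEnt (q a) (p a)

/-- `ν` is an invariant measure of the kernel `q`. -/
def Invariant {A : Type} [Fintype A] (ν : A → ℝ) (q : A → A → ℝ) : Prop :=
  ∀ y, ∑ x, ν x * q x y = ν y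

/-- Extended-real logarithm: `⊥` at nonpositive arguments. -/
def elog (x : ℝ) : EReal := if x ≤ 0 then (⊥ : EReal) else ((Real.log x : ℝ) : EReal)

/-- Empirical measure of a finite trajectory `f : Fin (n+1) → A`. -/
def empMeas {A : Type} [Fintype A] [DecidableEq A] (n : ℕ) (f : Fin (n + 1) → A) :
    ProbMeas A :=
  ⟨fun a => ((Finset.univ.filter (fun i => f i = a)).card : ℝ) / (n + 1),
    fun a => by positivity, by
      have key : ∑ a : A, ((Finset.univ.filter (fun i => f i = a)).card) = n + 1 := by
        have h := Finset.card_eq_sum_card_fiberwise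
          (s := (Finset.univ : Finset (Fin (n + 1)))) (t := (Finset.univ : Finset A))
          (f := f) (fun i _ => Finset.mem_univ (f i))
        simpa using h.symm
      have key' : ∑ a : A, (((Finset.univ.filter (fun i => f i = a)).card : ℝ)) = (n : ℝ) + 1 := by
        have h2 := congrArg (fun m : ℕ => (m : ℝ)) key
        push_cast at h2
        simpa using h2
      rw [← Finset.sum_div, key', div_self (by positivity)]⟩

section Graph

variable {V : Type} [Fintype V] [DecidableEq V]

/-- Weight of an edge given the set `F` of already traversed edges. -/
def gw (δ : ℝ) (F : Finset (Sym2 V)) (e : Sym2 V) : ℝ := if e ∈ F then δ else 1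

/-- The transition kernel `p̂_F` on `V`. -/
def phat (G : SimpleGraph V) [DecidableRel G.Adj] (δ : ℝ) (F : Finset (Sym2 V))
    (x y : V) : ℝ :=
  if G.Adj x y then gw δ F s(x, y) / ∑ z ∈ G.neighborFinset x, gw δ F s(x, z) else 0

/-- Two edges are adjacent iff they share a vertex. -/
def edgeAdj (e e' : Sym2 V) : Prop := ∃ v, v ∈ e ∧ v ∈ e'

/-- `x` is a vertex of the edge set `F`. -/
def memVerts (F : Finset (Sym2 V)) (x : V) : Prop := ∃ e ∈ F, x ∈ e

/-- `𝒯_G`: stochastic matrices on `V` adapted to `G`. -/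
def TG (G : SimpleGraph V) : Set (V → V → ℝ) :=
  {q | (∀ x y, 0 ≤ q x y) ∧ (∀ x, ∑ y, q x y = 1) ∧ ∀ x y, q x y ≠ 0 → G.Adj x y}

/-- `𝒯(F)`: stochastic kernels from the vertex set of `F` to `V`, supported on `F`. -/
def TE (F : Finset (Sym2 V)) : Set (V → V → ℝ) :=
  {q | (∀ x y, 0 ≤ q x y) ∧ (∀ x, memVerts F x → ∑ y, q x y = 1) ∧
    ∀ x y, q x y ≠ 0 → s(x, y) ∈ F}

/-- `ℰ`: admissible increasing sequences of traversed edge sets. -/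
def seqE (G : SimpleGraph V) [DecidableRel G.Adj] (v₁ : V) :
    Set (Fin G.edgeFinset.card → Finset (Sym2 V)) :=
  {Es | (∀ k, Es k ⊆ G.edgeFinset) ∧ (∀ k, (Es k).card = (k : ℕ) + 1) ∧
    (∀ k l : Fin G.edgeFinset.card, (k : ℕ) + 1 = (l : ℕ) → Es k ⊂ Es l) ∧
    (∀ k : Fin G.edgeFinset.card, (k : ℕ) = 0 → ∃ e ∈ Es k, v₁ ∈ e) ∧
    (∀ k l : Fin G.edgeFinset.card, (k : ℕ) + 1 = (l : ℕ) →
      ∀ e ∈ Es l \ Es k, ∃ e' ∈ Es k, edgeAdj e e')}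

/-- The rate function `I_δ`. -/
def Ifun (G : SimpleGraph V) [DecidableRel G.Adj] (v₁ : V) (δ : ℝ) (ν : ProbMeas V) : EReal :=
  sInf { c : EReal |
    ∃ (νs : Fin G.edgeFinset.card → ProbMeas V) (r : Fin G.edgeFinset.card → ℝ)
      (Es : Fin G.edgeFinset.card → Finset (Sym2 V))
      (qs : Fin G.edgeFinset.card → V → V → ℝ),
      Es ∈ seqE G v₁ ∧ (∀ k, 0 ≤ r k) ∧ (∑ k, r k = 1) ∧
      (∀ k x, (νs k).1 x ≠ 0 → memVerts (Es k) x) ∧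
      (∀ x, ∑ k, r k * (νs k).1 x = ν.1 x) ∧
      (∀ k, qs k ∈ TE (Es k)) ∧ (∀ k, Invariant (νs k).1 (qs k)) ∧
      c = ∑ k, ((r k : ℝ) : EReal) * relEntInt (νs k).1 (qs k) (phat G δ (Es k)) }

/-- Edges traversed along a path, given as a list of consecutively visited vertices. -/
def pathEdges : List V → Finset (Sym2 V)
  | [] => ∅
  | [_] => ∅
  | x :: y :: t => insert s(x, y) (pathEdges (y :: t))

/-- Product of one-step ORRW transition probabilities along a trajectory,
the trajectory being listed in reverse chronological order. -/
def stepsProb (G : SimpleGraph V) [DecidableRel G.Adj] (δ : ℝ) : List V → ℝ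
  | [] => 1
  | [_] => 1
  | y :: x :: t => phat G δ (pathEdges (x :: t).reverse) x y * stepsProb G δ (x :: t)

/-- The law of `(X_0, …, X_n)` for the `δ`-ORRW started at `v₁`. -/
def trajProb (G : SimpleGraph V) [DecidableRel G.Adj] (δ : ℝ) (v₁ : V) (n : ℕ)
    (f : Fin (n + 1) → V) : ℝ :=
  if f 0 = v₁ then stepsProb G δ (List.ofFn f).reverse else 0

/-- `P_{v₁}(L_{n+1} ∈ C)`: the probability that the empirical measure of the first
`n+1` positions of the `δ`-ORRW lies in `C`. -/
def probEmp (G : SimpleGraph V) [DecidableRel G.Adj] (δ : ℝ) (v₁ : V) (n : ℕ)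
    (C : Set (ProbMeas V)) : ℝ :=
  ∑ f : Fin (n + 1) → V, if empMeas n f ∈ C then trajProb G δ v₁ n f else 0

/-- The family `𝒮` of edge sets of connected subgraphs having an edge at `v₁`. -/
def scrS (G : SimpleGraph V) [DecidableRel G.Adj] (v₁ : V) : Set (Finset (Sym2 V)) :=
  {F | F ⊆ G.edgeFinset ∧ (∃ e ∈ F, v₁ ∈ e) ∧
    ∀ x y : V, memVerts F x → memVerts F y →
      (SimpleGraph.fromEdgeSet (↑F : Set (Sym2 V))).Reachable x y}

/-- `𝒮₀` is a decreasing subset of `𝒮`. -/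
def DecreasingIn (G : SimpleGraph V) [DecidableRel G.Adj] (v₁ : V)
    (S0 : Set (Finset (Sym2 V))) : Prop :=
  ∀ F₁ F₂, F₁ ∈ scrS G v₁ → F₂ ∈ scrS G v₁ → F₁ ⊆ F₂ → F₂ ∈ S0 → F₁ ∈ S0

/-- `P_{v₁}(T_{𝒮₀} > n)`. -/
def probTgt (G : SimpleGraph V) [DecidableRel G.Adj] (δ : ℝ) (v₁ : V)
    (S0 : Set (Finset (Sym2 V))) (n : ℕ) : ℝ :=
  ∑ f : Fin (n + 1) → V,
    if ∀ k, 1 ≤ k → k ≤ n → pathEdges ((List.ofFn f).take (k + 1)) ∈ S0 then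
      trajProb G δ v₁ n f
    else 0

/-- `P_{v₁}(C_E > n)` for the edge cover time `C_E`. -/
def probCgt (G : SimpleGraph V) [DecidableRel G.Adj] (δ : ℝ) (v₁ : V) (n : ℕ) : ℝ :=
  ∑ f : Fin (n + 1) → V,
    if ¬ G.edgeFinset ⊆ pathEdges (List.ofFn f) then trajProb G δ v₁ n f else 0

/-- `E_{v₁}[exp (α T_{𝒮₀})]`, valued in `ℝ≥0∞`; the stopping time takes values in
`{1, 2, …} ∪ {∞}`. -/
def expT (G : SimpleGraph V) [DecidableRel G.Adj] (δ : ℝ) (v₁ : V)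
    (S0 : Set (Finset (Sym2 V))) (α : ℝ) : ℝ≥0∞ :=
  (∑' n : ℕ, ENNReal.ofReal
      (Real.exp (α * (n + 1)) * (probTgt G δ v₁ S0 n - probTgt G δ v₁ S0 (n + 1)))) +
    (if 0 < α then (⊤ : ℝ≥0∞) else if α = 0 then 1 else 0) *
      ENNReal.ofReal (⨅ n : ℕ, probTgt G δ v₁ S0 n)

/-- `E_{v₁}[exp (α C_E)]`, valued in `ℝ≥0∞`. -/
def expC (G : SimpleGraph V) [DecidableRel G.Adj] (δ : ℝ) (v₁ : V) (α : ℝ) : ℝ≥0∞ :=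
  (∑' n : ℕ, ENNReal.ofReal
      (Real.exp (α * (n + 1)) * (probCgt G δ v₁ n - probCgt G δ v₁ (n + 1)))) +
    (if 0 < α then (⊤ : ℝ≥0∞) else if α = 0 then 1 else 0) *
      ENNReal.ofReal (⨅ n : ℕ, probCgt G δ v₁ n)

/-- The critical exponent `α_c(δ)` attached to a family `𝒮₀` of edge sets. -/
def alphaC (G : SimpleGraph V) [DecidableRel G.Adj] (δ : ℝ)
    (S0 : Set (Finset (Sym2 V))) : EReal :=
  sInf { c : EReal | ∃ (ν : ProbMeas V) (F : Finset (Sym2 V)) (q : V → V → ℝ),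
    F ∈ S0 ∧ q ∈ TE F ∧ (∀ x, ν.1 x ≠ 0 → memVerts F x) ∧ Invariant ν.1 q ∧
    c = relEntInt ν.1 q (phat G δ F) }

/-- `α_c^1(δ)`: the critical exponent for the cover time. -/
def alphaC1 (G : SimpleGraph V) [DecidableRel G.Adj] (v₁ : V) (δ : ℝ) : EReal :=
  alphaC G δ (scrS G v₁ \ {G.edgeFinset})

end Graph

section Lifted

variable {V : Type} [Fintype V] [LinearOrder V]

/-- Smaller endpoint of an unordered pair. -/
def sym2lo (e : Sym2 V) : V := Sym2.lift ⟨fun a b => min a b, fun a b => min_comm a b⟩ e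

/-- Larger endpoint of an unordered pair. -/
def sym2hi (e : Sym2 V) : V := Sym2.lift ⟨fun a b => max a b, fun a b => max_comm a b⟩ e

/-- `V_S = E × {-1, 1}`: vertex set of the lifted directed graph `S`
(`true` plays the role of `+1`). -/
abbrev VSet (G : SimpleGraph V) [DecidableRel G.Adj] : Type :=
  {e : Sym2 V // e ∈ G.edgeFinset} × Bool

/-- Tail `z⁻` of an oriented edge. -/
def zm (G : SimpleGraph V) [DecidableRel G.Adj] (z : VSet G) : V :=
  if z.2 then sym2lo z.1.1 else sym2hi z.1.1

/-- Head `z⁺` of an oriented edge. -/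
def zp (G : SimpleGraph V) [DecidableRel G.Adj] (z : VSet G) : V :=
  if z.2 then sym2hi z.1.1 else sym2lo z.1.1

/-- The kernel `p_F` on the lifted directed graph `S`. -/
def pS (G : SimpleGraph V) [DecidableRel G.Adj] (δ : ℝ) (F : Finset (Sym2 V))
    (z₁ z₂ : VSet G) : ℝ :=
  if zp G z₁ = zm G z₂ then
    gw δ F z₂.1.1 / ∑ w : VSet G, (if zp G z₁ = zm G w then gw δ F w.1.1 else 0)
  else 0

/-- `𝒯_S`: stochastic matrices on `V_S` moving along orientations. -/
def TS (G : SimpleGraph V) [DecidableRel G.Adj] : Set (VSet G → VSet G → ℝ) :=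
  {q | (∀ z w, 0 ≤ q z w) ∧ (∀ z, ∑ w, q z w = 1) ∧ ∀ z w, q z w ≠ 0 → zp G z = zm G w}

/-- `𝒞(𝒮₀)`: probability measures on `V_S` whose first marginal is supported in
some member of `𝒮₀`. -/
def CC (G : SimpleGraph V) [DecidableRel G.Adj] (S0 : Set (Finset (Sym2 V))) :
    Set (ProbMeas (VSet G)) :=
  {μ | ∃ F ∈ S0, ∀ z : VSet G, μ.1 z ≠ 0 → z.1.1 ∈ F}

/-- `Λ_{δ,𝒮₀}`. -/
def Lam (G : SimpleGraph V) [DecidableRel G.Adj] (v₁ : V) (δ : ℝ)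
    (S0 : Set (Finset (Sym2 V))) (μ : ProbMeas (VSet G)) : EReal :=
  sInf { c : EReal |
    ∃ (μs : Fin G.edgeFinset.card → ProbMeas (VSet G)) (r : Fin G.edgeFinset.card → ℝ)
      (Es : Fin G.edgeFinset.card → Finset (Sym2 V))
      (qs : Fin G.edgeFinset.card → VSet G → VSet G → ℝ),
      Es ∈ seqE G v₁ ∧ (∀ k, 0 ≤ r k) ∧ (∀ k, Es k ∉ S0 → r k = 0) ∧ (∑ k, r k = 1) ∧
      (∀ k z, (μs k).1 z ≠ 0 → z.1.1 ∈ Es k) ∧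
      (∀ z, ∑ k, r k * (μs k).1 z = μ.1 z) ∧
      (∀ k, qs k ∈ TS G) ∧ (∀ k, Invariant (μs k).1 (qs k)) ∧
      c = ∑ k, ((r k : ℝ) : EReal) * relEntInt (μs k).1 (qs k) (pS G δ (Es k)) }

/-- `Λ^z_{δ,𝒮₀}`. -/
def LamZ (G : SimpleGraph V) [DecidableRel G.Adj] (v₁ : V) (δ : ℝ)
    (S0 : Set (Finset (Sym2 V))) (z : VSet G) (μ : ProbMeas (VSet G)) : EReal :=
  sInf { c : EReal |
    ∃ (μs : Fin G.edgeFinset.card → ProbMeas (VSet G)) (r : Fin G.edgeFinset.card → ℝ)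
      (Es : Fin G.edgeFinset.card → Finset (Sym2 V))
      (qs : Fin G.edgeFinset.card → VSet G → VSet G → ℝ),
      Es ∈ seqE G v₁ ∧ (∀ k : Fin G.edgeFinset.card, (k : ℕ) = 0 → Es k = {z.1.1}) ∧
      (∀ k, 0 ≤ r k) ∧ (∀ k, Es k ∉ S0 → r k = 0) ∧ (∑ k, r k = 1) ∧
      (∀ k w, (μs k).1 w ≠ 0 → w.1.1 ∈ Es k) ∧
      (∀ w, ∑ k, r k * (μs k).1 w = μ.1 w) ∧
      (∀ k, qs k ∈ TS G) ∧ (∀ k, Invariant (μs k).1 (qs k)) ∧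
      c = ∑ k, ((r k : ℝ) : EReal) * relEntInt (μs k).1 (qs k) (pS G δ (Es k)) }

/-- `Λ₁`: the Donsker–Varadhan functional for the simple random walk on `S`
(whose kernel is `pS` with `δ = 1`). -/
def Lam1 (G : SimpleGraph V) [DecidableRel G.Adj] (μ : ProbMeas (VSet G)) : EReal :=
  sInf { c : EReal | ∃ q ∈ TS G, Invariant μ.1 q ∧ c = relEntInt μ.1 q (pS G 1 ∅) }

/-- Boundary `∂F` of an edge set: edges of `F` adjacent to some edge outside `F`. -/
def bdry (G : SimpleGraph V) [DecidableRel G.Adj] (F : Finset (Sym2 V)) : Finset (Sym2 V) :=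
  F.filter fun e => ∃ e' ∈ G.edgeFinset \ F, edgeAdj e e'

/-- Out-degree `d(z)` of `z` in `S`. -/
def outDeg (G : SimpleGraph V) [DecidableRel G.Adj] (z : VSet G) : ℕ :=
  (Finset.univ.filter (fun w : VSet G => zp G z = zm G w)).card

/-- Number `k(z)` of out-neighbours of `z` lying in `F × {-1, 1}`. -/
def outDegIn (G : SimpleGraph V) [DecidableRel G.Adj] (F : Finset (Sym2 V))
    (z : VSet G) : ℕ :=
  (Finset.univ.filter (fun w : VSet G => zp G z = zm G w ∧ w.1.1 ∈ F)).card

/-- The law of `(Z_0, …, Z_n)` for the lifted `δ`-ORRW conditioned on `Z_0 = z`. -/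
def liftTraj (G : SimpleGraph V) [DecidableRel G.Adj] (δ : ℝ) (z : VSet G) (n : ℕ)
    (g : Fin (n + 1) → VSet G) : ℝ :=
  if g 0 = z then
    ∏ i : Fin n,
      pS G δ ((Finset.Iic i.castSucc).image (fun j => (g j).1.1))
        (g i.castSucc) (g i.succ)
  else 0

/-- The restricted logarithmic Laplace functional `W^{n+1}_{𝒮₀}(z)`. -/
def Wres (G : SimpleGraph V) [DecidableRel G.Adj] (δ : ℝ) (z : VSet G)
    (S0 : Set (Finset (Sym2 V))) (h : ProbMeas (VSet G) → ℝ) (n : ℕ) : EReal :=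
  if 0 < ∑ g : Fin (n + 1) → VSet G,
      (if empMeas n g ∈ CC G S0 then liftTraj G δ z n g else 0) then
    ((-((((n : ℝ) + 1))⁻¹ * Real.log (∑ g : Fin (n + 1) → VSet G,
      if empMeas n g ∈ CC G S0 then
        Real.exp (-((n : ℝ) + 1) * h (empMeas n g)) * liftTraj G δ z n g
      else 0)) : ℝ) : EReal)
  else (⊤ : EReal)

end Lifted

section Helpers

variable {V : Type} [Fintype V] [DecidableEq V]

lemma exists_nbr (G : SimpleGraph V) (hG : G.Connected)
    (hV : 3 ≤ Fintype.card V) (x : V) : ∃ y, G.Adj x y := by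
  haveI : Nontrivial V := Fintype.one_lt_card_iff_nontrivial.mp (by omega)
  exact hG.preconnected.exists_adj_of_nontrivial x

lemma exists_step (G : SimpleGraph V) [DecidableRel G.Adj] (hG : G.Connected)
    (F : Finset (Sym2 V)) (hF : F ⊆ G.edgeFinset) (hne : F.Nonempty) (hFn : F ≠ G.edgeFinset) :
    ∃ e ∈ G.edgeFinset, e ∉ F ∧ ∃ e' ∈ F, edgeAdj e e' := by
  by_contra hcon
  push Not at hcon
  have hall : ∀ e ∈ G.edgeFinset, ∀ v, v ∈ e → memVerts F v → e ∈ F := by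
    rintro e he v hv ⟨e', he', hv'⟩
    by_contra h
    exact hcon e he h e' he' ⟨v, hv, hv'⟩
  have hstep : ∀ x y, G.Adj x y → memVerts F x → memVerts F y := by
    intro x y hxy hx
    exact ⟨s(x, y), hall _ (by simpa using hxy) x (by simp) hx, by simp⟩
  have hreach : ∀ x y, G.Walk x y → memVerts F x → memVerts F y := by
    intro x y w
    induction w with
    | nil => exact id
    | cons h _ ih => exact fun hx => ih (hstep _ _ h hx)
  obtain ⟨e0, he0⟩ := hne
  obtain ⟨a, ha⟩ : ∃ a, a ∈ e0 := ⟨_, Sym2.out_fst_mem e0⟩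
  have hV : ∀ y, memVerts F y := fun y => by
    obtain ⟨w⟩ := hG.preconnected a y
    exact hreach a y w ⟨e0, he0, ha⟩
  apply hFn
  refine Finset.Subset.antisymm hF fun e he => ?_
  exact hall e he _ (Sym2.out_fst_mem e) (hV _)

lemma exists_seqE (G : SimpleGraph V) [DecidableRel G.Adj] (hG : G.Connected)
    (v₁ : V) (hv : ∃ y, G.Adj v₁ y) : ∃ Es, Es ∈ seqE G v₁ := by
  obtain ⟨y, hy⟩ := hv
  have hst : ∀ F : Finset (Sym2 V), ∃ F' : Finset (Sym2 V),
      F ⊆ G.edgeFinset → F.Nonempty → F ≠ G.edgeFinset →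
      F' ⊆ G.edgeFinset ∧ F'.card = F.card + 1 ∧ F ⊂ F' ∧
        ∀ e ∈ F' \ F, ∃ e' ∈ F, edgeAdj e e' := by
    intro F
    by_cases h : F ⊆ G.edgeFinset ∧ F.Nonempty ∧ F ≠ G.edgeFinset
    · obtain ⟨h1, h2, h3⟩ := h
      obtain ⟨e, he, heF, hadj⟩ := exists_step G hG F h1 h2 h3
      refine ⟨insert e F, fun _ _ _ => ⟨?_, Finset.card_insert_of_notMem heF,
        Finset.ssubset_insert heF, ?_⟩⟩
      · exact Finset.insert_subset he h1
      · intro e' he'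
        have : e' = e := by
          simp only [Finset.mem_sdiff, Finset.mem_insert] at he'
          tauto
        rw [this]; exact hadj
    · exact ⟨F, fun a b c => absurd ⟨a, b, c⟩ h⟩
  choose st hst using hst
  let S : ℕ → Finset (Sym2 V) := fun n => Nat.rec {s(v₁, y)} (fun _ F => st F) n
  have hS0 : S 0 = {s(v₁, y)} := rfl
  have hSs : ∀ n, S (n + 1) = st (S n) := fun n => rfl
  have key : ∀ n, n < G.edgeFinset.card → S n ⊆ G.edgeFinset ∧ (S n).card = n + 1 := by
    intro n
    induction n with
    | zero =>
      intro _
      rw [hS0]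
      refine ⟨?_, by simp⟩
      simpa using hy
    | succ n ih =>
      intro hn
      obtain ⟨h1, h2⟩ := ih (by omega)
      obtain ⟨h3, h4, -, -⟩ := hst (S n) h1 (Finset.card_pos.mp (by omega))
        (fun h => by rw [h] at h2; omega)
      rw [hSs]
      exact ⟨h3, by omega⟩
  have key2 : ∀ n, n + 1 < G.edgeFinset.card → S n ⊂ S (n + 1) ∧
      ∀ e ∈ S (n + 1) \ S n, ∃ e' ∈ S n, edgeAdj e e' := by
    intro n hn
    obtain ⟨h1, h2⟩ := key n (by omega)
    obtain ⟨-, -, h5, h6⟩ := hst (S n) h1 (Finset.card_pos.mp (by omega))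
      (fun h => by rw [h] at h2; omega)
    rw [hSs]
    exact ⟨h5, h6⟩
  refine ⟨fun k => S k, fun k => (key k k.2).1, fun k => (key k k.2).2, ?_, ?_, ?_⟩
  · intro k l hkl
    have := (key2 k (by omega)).1
    rwa [hkl] at this
  · intro k hk
    refine ⟨s(v₁, y), ?_, by simp⟩
    simp [hk, hS0]
  · intro k l hkl
    have := (key2 k (by omega)).2
    rwa [hkl] at this

lemma exists_default (F : Finset (Sym2 V)) (hF : F.Nonempty) :
    ∃ (μ : ProbMeas V) (q : V → V → ℝ), q ∈ TE F ∧ (∀ x, μ.1 x ≠ 0 → memVerts F x) ∧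
      Invariant μ.1 q := by
  obtain ⟨e, he⟩ := hF
  induction e using Sym2.ind with
  | _ a b =>
  have hf : ∀ x, ∃ y, memVerts F x → s(x, y) ∈ F := by
    intro x
    by_cases h : memVerts F x
    · obtain ⟨e, he, hx⟩ := h
      obtain ⟨y, rfl⟩ := Sym2.mem_iff_exists.mp hx
      exact ⟨y, fun _ => he⟩
    · exact ⟨x, fun h' => absurd h' h⟩
  choose f0 hf0 using hf
  let f : V → V := fun x => if x = a then b else if x = b then a else f0 x
  have hfa : f a = b := by simp [f]
  have hfb : f b = a := by
    by_cases h : b = a <;> simp [f, h]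
  have hf : ∀ x, memVerts F x → s(x, f x) ∈ F := by
    intro x hx
    simp only [f]
    split_ifs with h1 h2
    · subst h1; exact he
    · subst h2; rw [Sym2.eq_swap]; exact he
    · exact hf0 x hx
  refine ⟨⟨fun x => (if x = a then 1/2 else 0) + (if x = b then 1/2 else 0), ?_, ?_⟩,
    fun x y => if memVerts F x ∧ y = f x then 1 else 0, ⟨?_, ?_, ?_⟩, ?_, ?_⟩
  · intro x; positivity
  · rw [Finset.sum_add_distrib]; simp; norm_num
  · intro x y; dsimp only; split_ifs <;> norm_num
  · intro x hx; simp [hx]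
  · intro x y hxy
    dsimp only at hxy
    split_ifs at hxy with h
    · rw [h.2]; exact hf x h.1
    · exact absurd rfl hxy
  · intro x hx
    dsimp only at hx
    by_cases h1 : x = a
    · exact ⟨_, he, by simp [h1]⟩
    by_cases h2 : x = b
    · exact ⟨_, he, by simp [h2]⟩
    simp [h1, h2] at hx
  · intro y
    have ha : memVerts F a := ⟨_, he, by simp⟩
    have hb : memVerts F b := ⟨_, he, by simp⟩
    simp only [add_mul, Finset.sum_add_distrib, ite_mul, zero_mul, Finset.sum_ite_eq',
      Finset.sum_ite_eq, Finset.mem_univ, if_true, ha, hb, hfa, hfb, true_and]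
    rw [add_comm]
    simp

lemma gw_pos {δ : ℝ} (hδ : 0 < δ) (F : Finset (Sym2 V)) (e : Sym2 V) : 0 < gw δ F e := by
  unfold gw; split_ifs <;> linarith

lemma phat_pos (G : SimpleGraph V) [DecidableRel G.Adj] {δ : ℝ} (hδ : 0 < δ)
    (F : Finset (Sym2 V)) {x y : V} (h : G.Adj x y) : 0 < phat G δ F x y := by
  unfold phat
  rw [if_pos h]
  exact div_pos (gw_pos hδ _ _) (Finset.sum_pos (fun _ _ => gw_pos hδ _ _) ⟨y, by simpa using h⟩)

lemma relEntInt_real (G : SimpleGraph V) [DecidableRel G.Adj] {δ : ℝ} (hδ : 0 < δ)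
    (F : Finset (Sym2 V)) (ν : V → ℝ) (q : V → V → ℝ) (hq : q ∈ TG G) :
    ∃ c : ℝ, relEntInt ν q (phat G δ F) = (c : EReal) := by
  refine ⟨∑ a, ν a * ∑ y, q a y * Real.log (q a y / phat G δ F a y), ?_⟩
  unfold relEntInt
  have hcs : ∀ (s : Finset V) (g : V → ℝ),
      ((∑ a ∈ s, g a : ℝ) : EReal) = ∑ a ∈ s, (g a : EReal) := by
    intro s g
    induction s using Finset.induction_on with
    | empty => simp
    | insert a s ha ih => rw [Finset.sum_insert ha, Finset.sum_insert ha, EReal.coe_add, ih]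
  rw [hcs]
  refine Finset.sum_congr rfl fun a _ => ?_
  rw [relEnt, if_pos, EReal.coe_mul]
  intro y hy
  by_contra h
  exact (phat_pos G hδ F (hq.2.2 a y h)).ne' hy

end Helpers

/-- `I_δ(ν) < ∞` iff `ν` is invariant for some `q̂ ∈ 𝒯_G`. -/
theorem orrw_rate_finite_iff {V : Type} [Fintype V] [DecidableEq V]
    (G : SimpleGraph V) [DecidableRel G.Adj] (hG : G.Connected)
    (hV : 3 ≤ Fintype.card V) (v₁ : V) (δ : ℝ) (hδ : 0 < δ) :
    ∀ ν : ProbMeas V, Ifun G v₁ δ ν < ⊤ ↔ ∃ q ∈ TG G, Invariant ν.1 q := by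
  intro ν
  constructor
  · intro h
    obtain ⟨c, ⟨νs, r, Es, qs, hEs, hr, -, hsup, hsum, hqs, hinv, -⟩, -⟩ := sInf_lt_iff.mp h
    choose f hf using exists_nbr G hG hV
    have hrow : ∀ x, ∑ y, ∑ k, r k * (νs k).1 x * qs k x y = ν.1 x := by
      intro x
      rw [Finset.sum_comm, ← hsum x]
      refine Finset.sum_congr rfl fun k _ => ?_
      rw [← Finset.mul_sum]
      by_cases h0 : (νs k).1 x = 0
      · simp [h0]
      · rw [(hqs k).2.1 x (hsup k x h0), mul_one]
    refine ⟨fun x y => if ν.1 x = 0 then (if y = f x then 1 else 0)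
      else (∑ k, r k * (νs k).1 x * qs k x y) / ν.1 x, ⟨?_, ?_, ?_⟩, ?_⟩
    · intro x y
      dsimp only
      split_ifs
      · norm_num
      · norm_num
      · exact div_nonneg (Finset.sum_nonneg fun k _ => mul_nonneg
          (mul_nonneg (hr k) ((νs k).2.1 x)) ((hqs k).1 x y)) (ν.2.1 x)
    · intro x
      by_cases h0 : ν.1 x = 0
      · simp [h0]
      · simp only [h0, if_false]
        rw [← Finset.sum_div, hrow, div_self h0]
    · intro x y hxy
      dsimp only at hxy
      split_ifs at hxy with h0 h1
      · rw [h1]; exact hf x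
      · exact absurd rfl hxy
      · have hne : (∑ k, r k * (νs k).1 x * qs k x y) ≠ 0 := fun h => hxy (by rw [h, zero_div])
        obtain ⟨k, -, hk⟩ := Finset.exists_ne_zero_of_sum_ne_zero hne
        have := hEs.1 k ((hqs k).2.2 x y (right_ne_zero_of_mul hk))
        simpa using this
    · intro y
      have : ∀ x, ν.1 x * (if ν.1 x = 0 then (if y = f x then 1 else 0)
          else (∑ k, r k * (νs k).1 x * qs k x y) / ν.1 x)
          = ∑ k, r k * (νs k).1 x * qs k x y := by
        intro x
        by_cases h0 : ν.1 x = 0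
        · have hz : ∀ k ∈ Finset.univ, r k * (νs k).1 x = 0 := by
            refine (Finset.sum_eq_zero_iff_of_nonneg
              (fun k _ => mul_nonneg (hr k) ((νs k).2.1 x))).mp ?_
            rw [hsum, h0]
          rw [h0, zero_mul]
          symm
          refine Finset.sum_eq_zero fun k hk => ?_
          rw [hz k hk, zero_mul]
        · rw [if_neg h0]; field_simp
      simp only [this]
      rw [Finset.sum_comm, ← hsum y]
      refine Finset.sum_congr rfl fun k _ => ?_
      rw [← hinv k y, Finset.mul_sum]
      exact Finset.sum_congr rfl fun x _ => by ring
  · rintro ⟨q, hq, hqinv⟩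
    obtain ⟨Es, hEs⟩ := exists_seqE G hG v₁ (exists_nbr G hG hV v₁)
    have hpos : 0 < G.edgeFinset.card := by
      obtain ⟨y, hy⟩ := exists_nbr G hG hV v₁
      exact Finset.card_pos.mpr ⟨s(v₁, y), by simpa using hy⟩
    have hdef : ∀ k, ∃ (μ : ProbMeas V) (q : V → V → ℝ), q ∈ TE (Es k) ∧
        (∀ x, μ.1 x ≠ 0 → memVerts (Es k) x) ∧ Invariant μ.1 q := fun k =>
      exists_default (Es k) (Finset.card_pos.mp (by rw [hEs.2.1 k]; omega))
    choose μ qd hqd hsup hinv using hdef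
    let L : Fin G.edgeFinset.card := ⟨G.edgeFinset.card - 1, by omega⟩
    have hL : Es L = G.edgeFinset := by
      refine Finset.eq_of_subset_of_card_le (hEs.1 L) ?_
      rw [hEs.2.1 L]
      simp only [L]; omega
    have hmem : ∀ x, memVerts (Es L) x := by
      intro x
      obtain ⟨y, hy⟩ := exists_nbr G hG hV x
      exact ⟨s(x, y), by rw [hL]; simpa using hy, by simp⟩
    obtain ⟨c, hc⟩ := relEntInt_real G hδ (Es L) ν.1 q hq
    refine lt_of_le_of_lt (b := (c : EReal)) (sInf_le ?_) (EReal.coe_lt_top c)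
    refine ⟨fun k => if k = L then ν else μ k, fun k => if k = L then 1 else 0, Es,
      fun k => if k = L then q else qd k, hEs, ?_, by simp, ?_, ?_, ?_, ?_, ?_⟩
    · intro k; dsimp only; split_ifs <;> norm_num
    · intro k x hx
      by_cases h : k = L
      · rw [h]; exact hmem x
      · simp only [h, if_false] at hx
        exact hsup k x hx
    · intro x; simp
    · intro k
      by_cases h : k = L
      · subst h
        simp only [if_true]
        refine ⟨hq.1, fun x _ => hq.2.1 x, fun x y hxy => ?_⟩
        rw [hL]
        simpa using hq.2.2 x y hxy
      · simp only [h, if_false]; exact hqd k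
    · intro k
      by_cases h : k = L
      · simp only [h, if_true]; exact hqinv
      · simp only [h, if_false]; exact hinv k
    · rw [Finset.sum_eq_single L]
      · simp [hc]
      · intro k _ h
        simp [h]
      · simp

end ORRW
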